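/- Let n ≥ 4, let L be a line in P^2, let p_2,…,p_n be distinct points of L, and let p_1 be a point not on L. Let Z = 2p_1 + p_2 + ⋯ + p_n be the fat points scheme with a double point at p_1 and simple points at p_2,…,p_n. Then the Waldschmidt constant satisfies α̂(I(Z)) ≥ (3n−5)/(n−1) = 3 − 2/(n−1). -/

import Mathlib

noncomputable section

open MvPolynomial

/-- `alpha J` is the least degree of a nonzero homogeneous form in the ideal `J`. -/
def alpha {kk : Type*} [Field kk] {σ : Type*} (J : Ideal (MvPolynomial σ kk)) : ℕ :=
  sInf {d : ℕ | ∃ f ∈ J, f ≠ 0 ∧ MvPolynomial.IsHomogeneous f d}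

/-- The homogeneous (prime) ideal of the point of `ℙ²` represented by the nonzero vector
`p`, generated by the linear forms vanishing at `p`. -/
def pointIdeal {kk : Type*} [Field kk] (p : Fin 3 → kk) : Ideal (MvPolynomial (Fin 3) kk) :=
  Ideal.span {f | f.IsHomogeneous 1 ∧ MvPolynomial.eval p f = 0}

/-- Two nonzero vectors represent the same point of `ℙ²`. -/
def projEq {kk : Type*} [Field kk] (p q : Fin 3 → kk) : Prop :=
  ∃ c : kk, c ≠ 0 ∧ q = c • p


theorem homog_one_form {kk : Type*} [Field kk] (f : MvPolynomial (Fin 3) kk)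
    (hf : f.IsHomogeneous 1) : ∃ c : Fin 3 → kk, f = ∑ i, C (c i) * X i := by
  have h : f ∈ homogeneousSubmodule (Fin 3) kk 1 := hf
  rw [homogeneousSubmodule_one_eq_span_X, Submodule.mem_span_range_iff_exists_fun] at h
  obtain ⟨c, hc⟩ := h
  exact ⟨c, by simp [← hc, MvPolynomial.smul_eq_C_mul]⟩

theorem coeff_dvd_of_mem_pow {S : Type*} [CommRing S] (l : S) (m : ℕ) :
    ∀ F : Polynomial S, F ∈ (Ideal.span {Polynomial.X, Polynomial.C l} : Ideal (Polynomial S)) ^ m →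
      ∀ j, l ^ (m - j) ∣ F.coeff j := by
  induction m with
  | zero => intro F _ j; simp
  | succ m ih =>
    intro F hF
    rw [pow_succ] at hF
    refine Submodule.mul_induction_on hF ?_ ?_
    · intro a ha b hb j
      obtain ⟨r, s, rfl⟩ := Ideal.mem_span_pair.1 hb
      have h1 := ih (a * r) (Ideal.mul_mem_right _ _ ha)
      have h2 := ih (a * s) (Ideal.mul_mem_right _ _ ha) j
      rw [mul_add, ← mul_assoc, ← mul_assoc, Polynomial.coeff_add, Polynomial.coeff_mul_C]
      apply dvd_add
      · cases j with
        | zero => simp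
        | succ j =>
          rw [Polynomial.coeff_mul_X]
          simpa using h1 j
      · refine (pow_dvd_pow l (show m + 1 - j ≤ (m - j) + 1 by omega)).trans ?_
        rw [pow_succ]
        exact mul_dvd_mul_right h2 l
    · intro a b ha hb j
      rw [Polynomial.coeff_add]
      exact dvd_add (ha j) (hb j)

theorem le_totalDegree_of_mem {kk : Type*} [Field kk] (N : ℕ) (f : MvPolynomial (Fin 2) kk)
    (hf : f ∈ idealOfVars (Fin 2) kk ^ N) (h0 : f ≠ 0) : N ≤ f.totalDegree := by
  rw [mem_pow_idealOfVars_iff] at hf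
  obtain ⟨x, hx⟩ := (MvPolynomial.support_nonempty).2 h0
  refine (hf x hx).trans ?_
  have := MvPolynomial.le_totalDegree hx
  exact this

/-- the linear form vanishing at (a, b) -/
def lform {kk : Type*} [Field kk] (v : Fin 2 → kk) : MvPolynomial (Fin 2) kk :=
  C (v 1) * X 0 - C (v 0) * X 1

theorem eval_lform {kk : Type*} [Field kk] (v w : Fin 2 → kk) :
    eval w (lform v) = v 1 * w 0 - v 0 * w 1 := by
  simp [lform]

theorem lform_ne {kk : Type*} [Field kk] (v : Fin 2 → kk) (hv : v ≠ 0) : lform v ≠ 0 := by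
  intro h
  apply hv
  have h1 := eval_lform v ![1, 0]
  have h2 := eval_lform v ![0, 1]
  rw [h] at h1 h2
  ext i
  fin_cases i
  · simpa using h2
  · simpa using h1.symm

theorem lform_homog {kk : Type*} [Field kk] (v : Fin 2 → kk) : (lform v).IsHomogeneous 1 := by
  unfold lform
  apply IsHomogeneous.sub <;> exact isHomogeneous_C_mul_X _ _

theorem lform_irred {kk : Type*} [Field kk] (v : Fin 2 → kk) (hv : v ≠ 0) :
    Irreducible (lform v) := by
  apply irreducible_of_totalDegree_eq_one
  · exact (lform_homog v).totalDegree (lform_ne v hv)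
  · intro x hx
    rw [isUnit_iff_ne_zero]
    rintro rfl
    apply lform_ne v hv
    ext i
    simpa using hx i

theorem lform_relPrime {kk : Type*} [Field kk] (v w : Fin 2 → kk) (hv : v ≠ 0)
    (h : w 1 * v 0 - w 0 * v 1 ≠ 0) : IsRelPrime (lform v) (lform w) := by
  rw [(lform_irred v hv).isRelPrime_iff_not_dvd]
  rintro ⟨q, hq⟩
  have := congrArg (eval v) hq
  rw [map_mul, eval_lform, eval_lform] at this
  apply h
  rw [this]
  ring

theorem degree_bound {kk : Type*} [Field kk] {ι : Type*} (s : Finset ι) (v : ι → Fin 2 → kk)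
    (hv : ∀ i ∈ s, v i ≠ 0)
    (hvw : ∀ i ∈ s, ∀ j ∈ s, i ≠ j → v j 1 * v i 0 - v j 0 * v i 1 ≠ 0) (e : ℕ)
    (f : MvPolynomial (Fin 2) kk) (h0 : f ≠ 0) (hf : ∀ i ∈ s, lform (v i) ^ e ∣ f) :
    s.card * e ≤ f.totalDegree := by
  have hd : (∏ i ∈ s, lform (v i) ^ e) ∣ f := by
    apply Finset.prod_dvd_of_isRelPrime
    · intro i hi j hj hij
      exact (lform_relPrime _ _ (hv i hi) (hvw i hi j hj hij)).pow
    · exact hf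
  obtain ⟨q, rfl⟩ := hd
  have hh : (∏ i ∈ s, lform (v i) ^ e).IsHomogeneous (∑ i ∈ s, 1 * e) :=
    IsHomogeneous.prod _ _ _ fun i _ => (lform_homog (v i)).pow e
  rw [totalDegree_mul_of_isDomain (left_ne_zero_of_mul h0) (right_ne_zero_of_mul h0),
    hh.totalDegree (left_ne_zero_of_mul h0)]
  simp

/-- linear change of coordinates -/
def subst {kk : Type*} [Field kk] (M : Matrix (Fin 3) (Fin 3) kk) :
    MvPolynomial (Fin 3) kk →ₐ[kk] MvPolynomial (Fin 3) kk :=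
  aeval fun i => ∑ r, C (M r i) * X r

theorem subst_inj {kk : Type*} [Field kk] (M : Matrix (Fin 3) (Fin 3) kk) (hM : IsUnit M) :
    Function.Injective (subst M) := by
  have h : (subst M⁻¹).comp (subst M) = AlgHom.id kk _ := by
    apply MvPolynomial.algHom_ext
    intro i
    have hm : M⁻¹ * M = 1 := Matrix.nonsing_inv_mul _ ((Matrix.isUnit_iff_isUnit_det M).1 hM)
    have hm' : ∀ j, ∑ r, M⁻¹ j r * M r i = (1 : Matrix (Fin 3) (Fin 3) kk) j i := by
      intro j; rw [← hm, Matrix.mul_apply]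
    have : (subst M⁻¹) ((subst M) (X i)) = ∑ j, C (∑ r, M⁻¹ j r * M r i) * X j := by
      simp [subst, Finset.mul_sum, Finset.sum_mul, MvPolynomial.algebraMap_eq]
      rw [Finset.sum_comm]
      refine Finset.sum_congr rfl fun j _ => Finset.sum_congr rfl fun r _ => by ring
    simp only [AlgHom.comp_apply, this, hm']
    simp [Matrix.one_apply]
  intro a b hab
  have := congrArg (subst M⁻¹) hab
  rw [← AlgHom.comp_apply, ← AlgHom.comp_apply, h] at this
  simpa using this

/-- change of coordinates followed by viewing as a polynomial in the variable 0 -/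
def phi {kk : Type*} [Field kk] (M : Matrix (Fin 3) (Fin 3) kk) :
    MvPolynomial (Fin 3) kk →ₐ[kk] Polynomial (MvPolynomial (Fin 2) kk) :=
  ((finSuccEquiv kk 2 : _ →ₐ[kk] _)).comp (subst M)

theorem phi_linear {kk : Type*} [Field kk] (M : Matrix (Fin 3) (Fin 3) kk)
    (f : MvPolynomial (Fin 3) kk) (hf : f.IsHomogeneous 1) :
    phi M f = Polynomial.C (C (eval (M 0) f)) * Polynomial.X +
      Polynomial.C (C (eval (M 1) f) * X 0 + C (eval (M 2) f) * X 1) := by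
  obtain ⟨c, rfl⟩ := homog_one_form f hf
  have h1 : (finSuccEquiv kk 2) (X 1) = Polynomial.C (X 0) := finSuccEquiv_X_succ (j := 0)
  have h2 : (finSuccEquiv kk 2) (X 2) = Polynomial.C (X 1) := finSuccEquiv_X_succ (j := 1)
  have hC : ∀ a : kk, (finSuccEquiv kk 2) (C a) = Polynomial.C (C a) := fun a => by
    simp [finSuccEquiv_apply]
  simp [phi, subst, Fin.sum_univ_three, h1, h2, hC, finSuccEquiv_X_zero,
    MvPolynomial.algebraMap_eq]
  ring

theorem phi_mem_pow {kk : Type*} [Field kk] (M : Matrix (Fin 3) (Fin 3) kk) (q : Fin 3 → kk)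
    (J : Ideal (Polynomial (MvPolynomial (Fin 2) kk)))
    (hJ : ∀ f : MvPolynomial (Fin 3) kk, f.IsHomogeneous 1 → eval q f = 0 → phi M f ∈ J)
    (N : ℕ) (f : MvPolynomial (Fin 3) kk) (hf : f ∈ pointIdeal q ^ N) : phi M f ∈ J ^ N := by
  have h : Ideal.map (phi M) (pointIdeal q) ≤ J := by
    rw [Ideal.map_le_iff_le_comap, pointIdeal, Ideal.span_le]
    rintro g ⟨h1, h2⟩
    exact hJ g h1 h2
  have := Ideal.mem_map_of_mem (phi M) hf
  rw [Ideal.map_pow] at this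
  exact Ideal.pow_right_mono h N this

theorem eval_comb {kk : Type*} [Field kk] (f : MvPolynomial (Fin 3) kk) (hf : f.IsHomogeneous 1)
    (a b c : kk) (A B D : Fin 3 → kk) :
    eval (a • A + b • B + c • D) f = a * eval A f + b * eval B f + c * eval D f := by
  obtain ⟨c, rfl⟩ := homog_one_form f hf
  simp [Fin.sum_univ_three]
  ring

theorem core_bound {kk : Type*} [Field kk] {ι : Type*} (s : Finset ι)
    (M : Matrix (Fin 3) (Fin 3) kk) (hM : IsUnit M)
    (p : ι → Fin 3 → kk) (v : ι → Fin 2 → kk)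
    (hp : ∀ i ∈ s, p i = v i 0 • M 1 + v i 1 • M 2)
    (hv : ∀ i ∈ s, v i ≠ 0)
    (hvw : ∀ i ∈ s, ∀ j ∈ s, i ≠ j → v j 1 * v i 0 - v j 0 * v i 1 ≠ 0)
    (m d : ℕ) (f : MvPolynomial (Fin 3) kk) (h0 : f ≠ 0) (hd : f.IsHomogeneous d)
    (hf0 : f ∈ pointIdeal (M 0) ^ (2 * m)) (hf : ∀ i ∈ s, f ∈ pointIdeal (p i) ^ m) :
    ∃ j : ℕ, 2 * m + j ≤ d ∧ s.card * (m - j) + j ≤ d := by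
  have hs0 : subst M f ≠ 0 := by
    rw [Ne, map_eq_zero_iff _ (subst_inj M hM)]; exact h0
  have hdeg : (subst M f).totalDegree ≤ d := by
    have : (subst M f).IsHomogeneous (1 * d) := by
      apply hd.aeval
      intro i
      apply IsHomogeneous.sum
      intro r _
      exact isHomogeneous_C_mul_X _ _
    simpa using this.totalDegree_le
  have hp0 : phi M f ≠ 0 := by
    simpa [phi] using hs0
  obtain ⟨j, hj⟩ : ∃ j, (phi M f).coeff j ≠ 0 := by
    by_contra! hcon
    exact hp0 (Polynomial.ext (by simpa using hcon))
  have hle := (totalDegree_coeff_finSuccEquiv_add_le (subst M f) j hj).trans hdeg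
  change ((phi M f).coeff j).totalDegree + j ≤ d at hle
  refine ⟨j, ?_, ?_⟩
  · have h1 : phi M f ∈ (Ideal.map Polynomial.C (idealOfVars (Fin 2) kk)) ^ (2 * m) := by
      apply phi_mem_pow M (M 0) _ _ _ _ hf0
      intro g hg hg0
      rw [phi_linear M g hg, hg0]
      simp only [map_zero, zero_mul, zero_add]
      apply Ideal.mem_map_of_mem
      have hX : ∀ i, (X i : MvPolynomial (Fin 2) kk) ∈ idealOfVars (Fin 2) kk := fun i =>
        Ideal.subset_span ⟨i, rfl⟩
      exact add_mem (Ideal.mul_mem_left _ _ (hX 0)) (Ideal.mul_mem_left _ _ (hX 1))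
    rw [← Ideal.map_pow, Ideal.mem_map_C_iff] at h1
    have := le_totalDegree_of_mem _ _ (h1 j) hj
    omega
  · have := degree_bound s v hv hvw (m - j) _ hj (by
      intro i hi
      refine coeff_dvd_of_mem_pow (lform (v i)) m _ ?_ j
      apply phi_mem_pow M (p i) _ _ _ _ (hf i hi)
      intro g hg hg0
      rw [phi_linear M g hg]
      have he := eval_comb g hg (v i 0) (v i 1) 0 (M 1) (M 2) 0
      simp only [zero_smul, add_zero, zero_mul] at he
      rw [← hp i hi, hg0] at he
      refine add_mem (Ideal.mul_mem_left _ _ (Ideal.subset_span (by simp))) ?_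
      have hlm : Polynomial.C (lform (v i)) ∈ (Ideal.span {Polynomial.X, Polynomial.C (lform (v i))} :
        Ideal (Polynomial (MvPolynomial (Fin 2) kk))) := Ideal.subset_span (by simp)
      by_cases hz : v i 0 = 0
      · have hz1 : v i 1 ≠ 0 := by
          intro hz1
          apply hv i hi
          ext r
          fin_cases r <;> simp [hz, hz1]
        have hB : eval (M 2) g = 0 := by
          rw [hz] at he
          simpa [hz1] using he.symm
        have : (C (eval (M 1) g) * X 0 + C (eval (M 2) g) * X 1 : MvPolynomial (Fin 2) kk)
            = C (eval (M 1) g / v i 1) * lform (v i) := by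
          rw [lform, hB, hz]
          simp only [map_zero, zero_mul, add_zero, sub_zero, ← mul_assoc, ← C_mul]
          rw [div_mul_cancel₀ _ hz1]
        rw [this, map_mul]
        exact Ideal.mul_mem_left _ _ hlm
      · have hA : eval (M 1) g = - (eval (M 2) g / v i 0) * v i 1 := by
          field_simp
          linear_combination -he
        have : (C (eval (M 1) g) * X 0 + C (eval (M 2) g) * X 1 : MvPolynomial (Fin 2) kk)
            = C (- (eval (M 2) g / v i 0)) * lform (v i) := by
          rw [lform, hA, mul_sub, ← mul_assoc, ← mul_assoc, ← C_mul, ← C_mul, neg_mul _ (v i 0),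
            div_mul_cancel₀ _ hz]
          simp
        rw [this, map_mul]
        exact Ideal.mul_mem_left _ _ hlm)
    omega

theorem exists_form {kk : Type*} [Field kk] (q : Fin 3 → kk) :
    ∃ f : MvPolynomial (Fin 3) kk, f ≠ 0 ∧ f.IsHomogeneous 1 ∧ f ∈ pointIdeal q := by
  by_cases h : q 0 = 0
  · refine ⟨X 0, X_ne_zero _, isHomogeneous_X _ _, Ideal.subset_span ⟨isHomogeneous_X _ _, ?_⟩⟩
    simpa using h
  · have hh : (C (q 1) * X 0 - C (q 0) * X 1 : MvPolynomial (Fin 3) kk).IsHomogeneous 1 := by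
      apply IsHomogeneous.sub <;> exact isHomogeneous_C_mul_X _ _
    refine ⟨C (q 1) * X 0 - C (q 0) * X 1, ?_, hh, Ideal.subset_span ⟨hh, ?_⟩⟩
    · intro h1
      have := congrArg (eval ![0, 1, 0]) h1
      simp at this
      exact h this
    · simp; ring

theorem exists_mem {kk : Type*} [Field kk] {n : ℕ} (p : Fin n → Fin 3 → kk) (e : Fin n → ℕ) :
    {d : ℕ | ∃ f ∈ (⨅ i, pointIdeal (p i) ^ e i), f ≠ 0 ∧ MvPolynomial.IsHomogeneous f d}.Nonempty := by
  choose g h0 h1 hm using fun i => exists_form (p i)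
  refine ⟨∑ i, 1 * e i, ∏ i, g i ^ e i, ?_, ?_, ?_⟩
  · rw [Ideal.mem_iInf]
    intro i
    exact Ideal.mem_of_dvd _ (Finset.dvd_prod_of_mem _ (Finset.mem_univ i))
      (Ideal.pow_mem_pow (hm i) _)
  · exact Finset.prod_ne_zero_iff.2 fun i _ => pow_ne_zero _ (h0 i)
  · exact IsHomogeneous.prod _ _ _ fun i _ => (h1 i).pow _

theorem indep_aux {kk : Type*} [Field kk] (A B : Fin 3 → kk) (hA : A ≠ 0) (hB : B ≠ 0)
    (h : ¬ projEq A B) (a b : kk) (hab : a • A + b • B = 0) : a = 0 ∧ b = 0 := by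
  by_cases hb : b = 0
  · subst hb
    simp [hA] at hab
    exact ⟨hab, rfl⟩
  · exfalso
    have hB' : B = (-(b⁻¹ * a)) • A := by
      have : b • B = (-a) • A := by
        rw [neg_smul]; exact eq_neg_of_add_eq_zero_right hab
      calc B = b⁻¹ • b • B := by rw [smul_smul, inv_mul_cancel₀ hb, one_smul]
        _ = _ := by rw [this, smul_smul, mul_neg]
    refine h ⟨_, ?_, hB'⟩
    intro hz
    rw [hz, zero_smul] at hB'
    exact hB hB'

/-- Let `n ≥ 4`, let `L = {ℓ = 0}` be a line of `ℙ²`, let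
`p 1, …, p (n-1)` be distinct points of `L`, and let `p 0` be a point not on `L`.  Let
`Z = 2·p 0 + p 1 + ⋯ + p (n-1)`.  Then `α̂(I(Z)) ≥ (3n − 5)/(n − 1) = 3 − 2/(n − 1)`. -/
theorem waldschmidt_ge_double_point_off_line
    {kk : Type*} [Field kk] [IsAlgClosed kk]
    (n : ℕ) (hn : 4 ≤ n)
    (ℓ : MvPolynomial (Fin 3) kk) (hl0 : ℓ ≠ 0) (hl1 : ℓ.IsHomogeneous 1)
    (p : Fin n → (Fin 3 → kk)) (hp0 : ∀ i, p i ≠ 0)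
    (hdist : ∀ i j, i ≠ j → ¬ projEq (p i) (p j))
    (hoff : MvPolynomial.eval (p ⟨0, by omega⟩) ℓ ≠ 0)
    (hon : ∀ i : Fin n, i ≠ ⟨0, by omega⟩ → MvPolynomial.eval (p i) ℓ = 0) :
    (⨅ k : ℕ+, (alpha (⨅ i : Fin n,
        pointIdeal (p i) ^ ((k : ℕ) * (if i = (⟨0, by omega⟩ : Fin n) then 2 else 1))) : ℝ)
          / ((k : ℕ) : ℝ))
      ≥ (3 * (n : ℝ) - 5) / ((n : ℝ) - 1) ∧
    (3 * (n : ℝ) - 5) / ((n : ℝ) - 1) = 3 - 2 / ((n : ℝ) - 1) := by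
  have hn' : (4 : ℝ) ≤ n := by exact_mod_cast hn
  refine ⟨?_, ?_⟩
  swap
  · have : (n : ℝ) - 1 ≠ 0 := by linarith
    field_simp
    ring
  apply le_ciInf
  intro k
  have hk : (0 : ℝ) < ((k : ℕ) : ℝ) := by exact_mod_cast k.pos
  rw [div_le_div_iff₀ (by linarith) hk]
  obtain ⟨f, hf, hf0, hfd⟩ := Nat.sInf_mem (exists_mem p
    (fun i => (k : ℕ) * (if i = (⟨0, by omega⟩ : Fin n) then 2 else 1)))
  change IsHomogeneous f (alpha (⨅ i : Fin n,
        pointIdeal (p i) ^ ((k : ℕ) * (if i = (⟨0, by omega⟩ : Fin n) then 2 else 1)))) at hfd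
  generalize alpha (⨅ i : Fin n,
        pointIdeal (p i) ^ ((k : ℕ) * (if i = (⟨0, by omega⟩ : Fin n) then 2 else 1))) = d at hfd ⊢
  rw [Ideal.mem_iInf] at hf
  set i0 : Fin n := ⟨0, by omega⟩ with hi0
  set i1 : Fin n := ⟨1, by omega⟩ with hi1
  set i2 : Fin n := ⟨2, by omega⟩ with hi2
  have h10 : i1 ≠ i0 := by simp [hi0, hi1]
  have h20 : i2 ≠ i0 := by simp [hi0, hi2]
  have h12 : i1 ≠ i2 := by simp [hi1, hi2]
  let M : Matrix (Fin 3) (Fin 3) kk := Matrix.of ![p i0, p i1, p i2]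
  have hev : ∀ a b c : kk, eval (a • p i1 + b • p i2 + c • p i0) ℓ = c * eval (p i0) ℓ := by
    intro a b c
    rw [eval_comb ℓ hl1, hon _ h10, hon _ h20]; ring
  have hM : IsUnit M := by
    rw [← Matrix.linearIndependent_rows_iff_isUnit, Fintype.linearIndependent_iff]
    intro g hg
    have hg' : g 1 • p i1 + g 2 • p i2 + g 0 • p i0 = 0 := by
      rw [← hg, Fin.sum_univ_three]
      change _ = g 0 • p i0 + g 1 • p i1 + g 2 • p i2
      abel
    have hz : g 0 = 0 := by
      have h := hev (g 1) (g 2) (g 0)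
      have hz0 := eval_comb ℓ hl1 0 0 0 0 0 0
      simp only [zero_smul, add_zero, zero_mul] at hz0
      rw [hg', hz0] at h
      exact (mul_eq_zero.1 h.symm).resolve_right hoff
    rw [hz, zero_smul, add_zero] at hg'
    have := indep_aux _ _ (hp0 i1) (hp0 i2) (hdist _ _ h12) _ _ hg'
    intro i
    fin_cases i
    · exact hz
    · exact this.1
    · exact this.2
  have hrep : ∀ i, ∃ v : Fin 2 → kk, i ≠ i0 → p i = v 0 • p i1 + v 1 • p i2 := by
    intro i
    by_cases hi : i = i0
    · exact ⟨0, fun h => absurd hi h⟩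
    have hw : Matrix.vecMul (Matrix.vecMul (p i) M⁻¹) M = p i := by
      rw [Matrix.vecMul_vecMul, Matrix.nonsing_inv_mul _ ((Matrix.isUnit_iff_isUnit_det M).1 hM),
        Matrix.vecMul_one]
    set w := Matrix.vecMul (p i) M⁻¹
    have hw' : w 1 • p i1 + w 2 • p i2 + w 0 • p i0 = p i := by
      rw [← hw]
      ext r
      simp [Matrix.vecMul, dotProduct, Fin.sum_univ_three, M]
      ring
    have h := hev (w 1) (w 2) (w 0)
    rw [hw', hon i hi] at h
    have hz := (mul_eq_zero.1 h.symm).resolve_right hoff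
    refine ⟨![w 1, w 2], fun _ => ?_⟩
    rw [hz, zero_smul, add_zero] at hw'
    simp [hw']
  choose v hv using hrep
  obtain ⟨j, hj1, hj2⟩ := core_bound (Finset.univ.erase i0) M hM p v
    (fun i hi => hv i (Finset.ne_of_mem_erase hi))
    (by
      intro i hi h
      apply hp0 i
      rw [hv i (Finset.ne_of_mem_erase hi), h]
      simp)
    (by
      intro i hi j hj hij h
      have ei := hv i (Finset.ne_of_mem_erase hi)
      have ej := hv j (Finset.ne_of_mem_erase hj)
      have e1 : (v j 1) • p i + (-(v i 1)) • p j = 0 := by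
        rw [ei, ej]
        ext r
        simp
        linear_combination (p i1 r) * h
      have e2 : (v j 0) • p i + (-(v i 0)) • p j = 0 := by
        rw [ei, ej]
        ext r
        simp
        linear_combination (-(p i2 r)) * h
      have r1 := indep_aux _ _ (hp0 i) (hp0 j) (hdist _ _ hij) _ _ e1
      have r2 := indep_aux _ _ (hp0 i) (hp0 j) (hdist _ _ hij) _ _ e2
      apply hp0 j
      rw [ej, r1.1, r2.1]
      simp)
    (k : ℕ) d f hf0 hfd
    (by
      have := hf i0
      rw [if_pos rfl, mul_comm] at this
      exact this)
    (by
      intro i hi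
      have := hf i
      rw [if_neg (Finset.ne_of_mem_erase hi), mul_one] at this
      exact this)
  rw [Finset.card_erase_of_mem (Finset.mem_univ _), Finset.card_univ, Fintype.card_fin] at hj2
  have a1 : 2 * ((k : ℕ) : ℝ) + j ≤ d := by exact_mod_cast hj1
  have a2 : ((n : ℝ) - 1) * ((k : ℕ) - j) + j ≤ d := by
    have b1 : (((n - 1 : ℕ) : ℝ)) * (((k : ℕ) - j : ℕ) : ℝ) + j ≤ d := by exact_mod_cast hj2
    rw [Nat.cast_sub (by omega : 1 ≤ n)] at b1
    have b2 : (((k : ℕ) : ℝ) - j) ≤ (((k : ℕ) - j : ℕ) : ℝ) := by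
      rw [sub_le_iff_le_add]
      exact_mod_cast (by omega : (k : ℕ) ≤ (k : ℕ) - j + j)
    have b3 := mul_le_mul_of_nonneg_left b2 (by linarith : (0 : ℝ) ≤ (n : ℝ) - 1)
    push_cast at b1
    linarith
  have a3 := mul_le_mul_of_nonneg_left a1 (by linarith : (0 : ℝ) ≤ (n : ℝ) - 2)
  linarith
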